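/- Let λ be a real number with λ > -1/2. Then liminf_{n→∞} (c_n(λ))²/n⁴ ≥ 1/((2λ+1)(2λ+5)) and limsup_{n→∞} (c_n(λ))²/n⁴ ≤ 1/(2(2λ+1)√(2λ+5)); moreover, if λ ≥ 2, then limsup_{n→∞} (c_n(λ))²/n⁴ ≤ 1/((λ+2)(λ+3)). (In particular, the asymptotic Markov constant c_*(λ) = lim_{n→∞} c_n(λ)/n², whenever it exists, satisfies 1/((2λ+1)(2λ+5)) ≤ (c_*(λ))² ≤ 1/(2(2λ+1)√(2λ+5)), with the improved upper bound 1/((λ+2)(λ+3)) for λ ≥ 2.) -/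

import Mathlib

open Polynomial Filter

/-- The weighted `L_2` norm with the Gegenbauer weight `w_lam(t) = (1-t^2)^(lam-1/2)`. -/
noncomputable def gegNorm (lam : ℝ) (f : ℝ → ℝ) : ℝ :=
  (∫ x in (-1:ℝ)..1, (f x) ^ 2 * (1 - x ^ 2) ^ (lam - 1/2)) ^ ((1:ℝ)/2)

/-- The best Markov constant `c_n(lam)` in `‖p'‖ ≤ c_n(lam) ‖p‖` for polynomials of degree ≤ n. -/
noncomputable def markovConst (lam : ℝ) (n : ℕ) : ℝ :=
  sSup { r : ℝ | ∃ p : Polynomial ℝ, p ≠ 0 ∧ p.natDegree ≤ n ∧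
    r = gegNorm lam (fun x => (Polynomial.derivative p).eval x) /
        gegNorm lam (fun x => p.eval x) }


/-- `x i ∼ L * i ^ p` as `i → ∞`, in the sense that `x i / i ^ p → L`. -/
def PowAsymp (x : ℕ → ℝ) (p L : ℝ) : Prop :=
  Tendsto (fun i : ℕ => x i / (i : ℝ) ^ p) atTop (nhds L)

namespace PowAsymp

variable {x y : ℕ → ℝ} {p q L M : ℝ}

theorem congr (h : PowAsymp x p L) (hxy : ∀ᶠ i in atTop, x i = y i) : PowAsymp y p L :=
  Tendsto.congr' (hxy.mono fun i hi => by simp only [hi]) h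

theorem mul (hx : PowAsymp x p L) (hy : PowAsymp y q M) :
    PowAsymp (fun i => x i * y i) (p + q) (L * M) := by
  refine Tendsto.congr' ?_ (Tendsto.mul hx hy)
  filter_upwards [eventually_gt_atTop 0] with i hi
  have hi' : (0 : ℝ) < i := by exact_mod_cast hi
  rw [Real.rpow_add hi', div_mul_div_comm]

theorem div (hx : PowAsymp x p L) (hy : PowAsymp y q M) (hM : M ≠ 0) :
    PowAsymp (fun i => x i / y i) (p - q) (L / M) := by
  refine Tendsto.congr' ?_ (Tendsto.div hx hy hM)
  filter_upwards [eventually_gt_atTop 0] with i hi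
  have hi' : (0 : ℝ) < i := by exact_mod_cast hi
  simp only [Pi.div_apply]
  rw [Real.rpow_sub hi', div_div_div_comm]

theorem const_mul (c : ℝ) (hx : PowAsymp x p L) : PowAsymp (fun i => c * x i) p (c * L) := by
  refine Tendsto.congr (fun i => ?_) (Tendsto.const_mul c hx)
  rw [mul_div_assoc]

theorem rpow (p : ℝ) : PowAsymp (fun i => (i : ℝ) ^ p) p 1 := by
  refine Tendsto.congr' ?_ tendsto_const_nhds
  filter_upwards [eventually_gt_atTop 0] with i hi
  have hi' : (0 : ℝ) < i := by exact_mod_cast hi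
  rw [div_self (Real.rpow_pos_of_pos hi' p).ne']

theorem natPow (k : ℕ) : PowAsymp (fun i => (i : ℝ) ^ k) k 1 :=
  (rpow k).congr (Eventually.of_forall fun i => Real.rpow_natCast i k)

theorem add (hx : PowAsymp x p L) (hy : PowAsymp y p M) :
    PowAsymp (fun i => x i + y i) p (L + M) :=
  Tendsto.congr (fun _ => (add_div _ _ _).symm) (Tendsto.add hx hy)

theorem comp (hx : PowAsymp x p L) {φ : ℕ → ℕ} {c : ℝ} (hc : 0 < c) (hφ : Tendsto φ atTop atTop)
    (hφc : Tendsto (fun i : ℕ => (φ i : ℝ) / i) atTop (nhds c)) :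
    PowAsymp (fun i => x (φ i)) p (L * c ^ p) := by
  have h1 := Tendsto.mul (Tendsto.comp hx hφ) (hφc.rpow_const (p := p) (Or.inl hc.ne'))
  refine Tendsto.congr' ?_ h1
  filter_upwards [eventually_gt_atTop 0, hφ.eventually_gt_atTop 0] with i hi hφi
  have hi' : (0 : ℝ) < i := by exact_mod_cast hi
  have hφi' : (0 : ℝ) < φ i := by exact_mod_cast hφi
  have h2 := (Real.rpow_pos_of_pos hi' p).ne'
  have h3 := (Real.rpow_pos_of_pos hφi' p).ne'
  simp only [Function.comp]
  rw [Real.div_rpow hφi'.le hi'.le]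
  field_simp

theorem tendsto_natCast_affine_div (a b : ℕ) :
    Tendsto (fun i : ℕ => ((a * i + b : ℕ) : ℝ) / i) atTop (nhds a) := by
  have h : Tendsto (fun i : ℕ => (a : ℝ) + b * (i : ℝ)⁻¹) atTop (nhds ((a : ℝ) + b * 0)) :=
    (tendsto_inv_atTop_nhds_zero_nat.const_mul _).const_add _
  rw [mul_zero, add_zero] at h
  refine Tendsto.congr' ?_ h
  filter_upwards [eventually_gt_atTop 0] with i hi
  have hi' : (0 : ℝ) < i := by exact_mod_cast hi
  push_cast
  field_simp

theorem affine (hx : PowAsymp x p L) {a : ℕ} (ha : 0 < a) (b : ℕ) :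
    PowAsymp (fun i => x (a * i + b)) p (L * (a : ℝ) ^ p) := by
  refine hx.comp (by exact_mod_cast ha) ?_ (tendsto_natCast_affine_div a b)
  exact tendsto_atTop_mono (fun i => by simp only [id]; nlinarith) tendsto_id

theorem shift (hx : PowAsymp x p L) (b : ℕ) : PowAsymp (fun i => x (i + b)) p L := by
  simpa using hx.affine one_pos b

theorem rpow_shift (p : ℝ) (b : ℕ) : PowAsymp (fun i => ((i + b : ℕ) : ℝ) ^ p) p 1 :=
  (rpow p).shift b

theorem rpow_succ_sub (p : ℝ) :
    PowAsymp (fun i => ((i : ℝ) + 1) ^ p - (i : ℝ) ^ p) (p - 1) p := by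
  have hd : HasDerivAt (fun t : ℝ => (1 + t) ^ p) p 0 := by
    have := ((hasDerivAt_id (0 : ℝ)).const_add 1).rpow_const (p := p) (Or.inl (by simp))
    simpa using this
  have h1 := hd.tendsto_slope_zero
  have h2 : Tendsto (fun i : ℕ => ((i : ℝ))⁻¹) atTop (nhdsWithin 0 {0}ᶜ) := by
    refine tendsto_nhdsWithin_iff.2 ⟨tendsto_inv_atTop_nhds_zero_nat, ?_⟩
    filter_upwards [eventually_gt_atTop 0] with i hi
    have hi' : (0 : ℝ) < i := by exact_mod_cast hi
    simp [hi'.ne']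
  refine Tendsto.congr' ?_ (h1.comp h2)
  filter_upwards [eventually_gt_atTop 0] with i hi
  have hi' : (0 : ℝ) < i := by exact_mod_cast hi
  have h3 : (1 + (i : ℝ)⁻¹) = ((i : ℝ) + 1) / i := by field_simp
  have h4 := (Real.rpow_pos_of_pos hi' p).ne'
  simp only [Function.comp, zero_add, add_zero, Real.one_rpow, inv_inv, smul_eq_mul]
  rw [h3, Real.div_rpow (by positivity) hi'.le, Real.rpow_sub hi', Real.rpow_one]
  field_simp

/-- Summation of power asymptotics, `∑_{i<k} i ^ p ∼ k ^ (p + 1) / (p + 1)`. -/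
theorem sum_range (hx : PowAsymp x p L) (hp : -1 < p) :
    PowAsymp (fun k => ∑ i ∈ Finset.range k, x i) (p + 1) (L / (p + 1)) := by
  have hp1 : 0 < p + 1 := by linarith
  set g : ℕ → ℝ := fun i => ((i : ℝ) + 1) ^ (p + 1) - (i : ℝ) ^ (p + 1) with hg
  have hg0 : ∀ i, 0 < g i := fun i =>
    sub_pos.2 (Real.rpow_lt_rpow (Nat.cast_nonneg i) (by linarith) hp1)
  have hgs : ∀ k, ∑ i ∈ Finset.range k, g i = (k : ℝ) ^ (p + 1) := fun k => by
    have := Finset.sum_range_sub (fun i : ℕ => (i : ℝ) ^ (p + 1)) k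
    simp only [Nat.cast_zero, Real.zero_rpow hp1.ne', sub_zero] at this
    rw [← this]
    simp [hg]
  have hga : PowAsymp g p (p + 1) := by simpa using rpow_succ_sub (p + 1)
  have hratio : Tendsto (fun i => x i / g i) atTop (nhds (L / (p + 1))) := by
    have := hx.div hga hp1.ne'
    simpa [PowAsymp] using this
  have ho : (fun i => x i - L / (p + 1) * g i) =o[atTop] g := by
    rw [Asymptotics.isLittleO_iff_tendsto (fun i hi => absurd hi (hg0 i).ne')]
    have := hratio.sub_const (L / (p + 1))
    rw [sub_self] at this
    refine this.congr fun i => ?_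
    have := (hg0 i).ne'
    field_simp
  have htop : Tendsto (fun k => ∑ i ∈ Finset.range k, g i) atTop atTop := by
    simp only [hgs]
    exact (tendsto_rpow_atTop hp1).comp tendsto_natCast_atTop_atTop
  have hs := (ho.sum_range (fun i => (hg0 i).le) htop).tendsto_div_nhds_zero
  have := hs.add_const (L / (p + 1))
  rw [zero_add] at this
  refine Tendsto.congr' ?_ this
  filter_upwards [eventually_gt_atTop 0] with k hk
  have hk' : (0 : ℝ) < k := by exact_mod_cast hk
  have := (Real.rpow_pos_of_pos hk' (p + 1)).ne'
  rw [Finset.sum_sub_distrib, ← Finset.mul_sum, hgs]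
  field_simp
  ring

theorem exists_abs_sub_le (hx : PowAsymp x p L) {ε : ℝ} (hε : 0 < ε) :
    ∃ K, 0 ≤ K ∧ ∀ k : ℕ, |x k - L * (k : ℝ) ^ p| ≤ ε * (k : ℝ) ^ p + K := by
  obtain ⟨N, hN⟩ := (Metric.tendsto_atTop.1 hx) ε hε
  refine ⟨∑ k ∈ Finset.range (N + 1), |x k - L * (k : ℝ) ^ p|,
    Finset.sum_nonneg fun _ _ => abs_nonneg _, fun k => ?_⟩
  have hk0 : 0 ≤ (k : ℝ) ^ p := Real.rpow_nonneg (Nat.cast_nonneg k) p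
  rcases Nat.lt_or_ge k (N + 1) with hk | hk
  · have := Finset.single_le_sum (f := fun k : ℕ => |x k - L * (k : ℝ) ^ p|)
      (fun _ _ => abs_nonneg _) (Finset.mem_range.2 hk)
    have h2 := mul_nonneg hε.le hk0
    linarith
  · have hk' : (0 : ℝ) < k := by exact_mod_cast (by omega : 0 < k)
    have hpos := Real.rpow_pos_of_pos hk' p
    have h1 := hN k (by omega)
    rw [Real.dist_eq] at h1
    have h2 : x k - L * (k : ℝ) ^ p = (x k / (k : ℝ) ^ p - L) * (k : ℝ) ^ p := by
      field_simp
    have h3 : 0 ≤ ∑ k ∈ Finset.range (N + 1), |x k - L * (k : ℝ) ^ p| :=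
      Finset.sum_nonneg fun _ _ => abs_nonneg _
    rw [h2, abs_mul, abs_of_pos hpos]
    nlinarith

end PowAsymp

/-- The weight `(1 - x ^ 2) ^ (lam - 1 / 2)` is integrable against continuous functions. -/
theorem intervalIntegrable_mul_weight {lam : ℝ} (hlam : -(1/2 : ℝ) < lam) {f : ℝ → ℝ}
    (hf : Continuous f) :
    IntervalIntegrable (fun x => f x * (1 - x ^ 2) ^ (lam - 1/2)) MeasureTheory.volume (-1) 1 := by
  have hneg : IntervalIntegrable (fun x : ℝ => (1 - x ^ 2) ^ (lam - 1/2))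
      MeasureTheory.volume (-1) 0 := by
    have h1 : IntervalIntegrable (fun x : ℝ => (1 + x) ^ (lam - 1/2))
        MeasureTheory.volume (-1) 0 := by
      have := (intervalIntegral.intervalIntegrable_rpow' (a := 0) (b := 1)
        (r := lam - 1/2) (by linarith)).comp_add_left 1
      simpa using this
    have h2 : ContinuousOn (fun x : ℝ => (1 - x) ^ (lam - 1/2)) (Set.uIcc (-1) 0) := by
      refine ContinuousOn.rpow_const (by fun_prop) fun x hx => Or.inl ?_
      rw [Set.uIcc_of_le (by norm_num)] at hx
      linarith [hx.2]
    refine (h1.mul_continuousOn h2).congr fun x hx => ?_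
    rw [Set.uIoc_of_le (by norm_num)] at hx
    rw [← Real.mul_rpow (by linarith [hx.1]) (by linarith [hx.2])]
    ring_nf
  have hpos : IntervalIntegrable (fun x : ℝ => (1 - x ^ 2) ^ (lam - 1/2))
      MeasureTheory.volume 0 1 := by
    have := hneg.comp_mul_left (c := -1)
    simpa using this.symm
  exact (hneg.trans hpos).continuousOn_mul hf.continuousOn

/-- Integration of a polynomial against the Gegenbauer weight. -/
noncomputable def gegInt (lam : ℝ) (p : ℝ[X]) : ℝ :=
  ∫ x in (-1:ℝ)..1, p.eval x * (1 - x ^ 2) ^ (lam - 1/2)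

theorem gegInt_add {lam : ℝ} (hlam : -(1/2 : ℝ) < lam) (p q : ℝ[X]) :
    gegInt lam (p + q) = gegInt lam p + gegInt lam q := by
  unfold gegInt
  rw [← intervalIntegral.integral_add (intervalIntegrable_mul_weight hlam p.continuous)
    (intervalIntegrable_mul_weight hlam q.continuous)]
  simp only [eval_add, add_mul]

theorem gegInt_one_pos {lam : ℝ} (hlam : -(1/2 : ℝ) < lam) : 0 < gegInt lam 1 := by
  refine intervalIntegral.intervalIntegral_pos_of_pos_on
    (intervalIntegrable_mul_weight hlam (Polynomial.continuous 1)) (fun x hx => ?_) (by norm_num)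
  have : 0 < 1 - x ^ 2 := by nlinarith [hx.1, hx.2]
  simpa using Real.rpow_pos_of_pos this _

/-- Integration by parts: `(1 - x ^ 2) ^ (lam + 1 / 2) * q` vanishes at both endpoints. -/
theorem gegInt_parts {lam : ℝ} (hlam : -(1/2 : ℝ) < lam) (q : ℝ[X]) :
    gegInt lam ((1 - X ^ 2) * derivative q - C (2 * lam + 1) * X * q) = 0 := by
  have hcont : ContinuousOn (fun x : ℝ => q.eval x * (1 - x ^ 2) ^ (lam + 1/2))
      (Set.Icc (-1) 1) := by
    refine q.continuous.continuousOn.mul (ContinuousOn.rpow_const (by fun_prop) fun x _ => ?_)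
    exact Or.inr (by linarith)
  have hintegrable := intervalIntegrable_mul_weight hlam
    ((1 - X ^ 2) * derivative q - C (2 * lam + 1) * X * q).continuous
  have h := intervalIntegral.integral_eq_sub_of_hasDerivAt_of_le (a := -1) (b := 1)
    (by norm_num) hcont (f' := fun x =>
      ((1 - X ^ 2) * derivative q - C (2 * lam + 1) * X * q).eval x * (1 - x ^ 2) ^ (lam - 1/2))
    (fun x hx => ?_) hintegrable
  · unfold gegInt
    rw [h]
    simp [Real.zero_rpow (by linarith : lam + 2⁻¹ ≠ 0)]
  · have hx0 : 0 < 1 - x ^ 2 := by nlinarith [hx.1, hx.2]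
    have hd : HasDerivAt (fun y : ℝ => 1 - y ^ 2) (-(2 * x)) x := by
      simpa using (hasDerivAt_pow 2 x).const_sub 1
    have := (q.hasDerivAt x).mul (hd.rpow_const (p := lam + 1/2) (Or.inl hx0.ne'))
    refine this.congr_deriv ?_
    have e1 : lam + 1/2 - 1 = lam - 1/2 := by ring
    have e2 : lam + 1/2 = (lam - 1/2) + 1 := by ring
    rw [e1, e2, Real.rpow_add_one hx0.ne']
    simp only [eval_sub, eval_mul, eval_one, eval_pow, eval_X, eval_C]
    ring

theorem gegInt_smul (lam c : ℝ) (p : ℝ[X]) : gegInt lam (C c * p) = c * gegInt lam p := by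
  unfold gegInt
  rw [← intervalIntegral.integral_const_mul]
  simp only [eval_mul, eval_C, mul_assoc]

theorem gegInt_sub {lam : ℝ} (hlam : -(1/2 : ℝ) < lam) (p q : ℝ[X]) :
    gegInt lam (p - q) = gegInt lam p - gegInt lam q := by
  have h := gegInt_smul lam (-1) q
  have h2 := gegInt_add hlam p (C (-1) * q)
  rw [h] at h2
  have e : p - q = p + C (-1) * q := by simp [sub_eq_add_neg]
  rw [e, h2]
  ring

theorem gegInt_sum {lam : ℝ} (hlam : -(1/2 : ℝ) < lam) {ι : Type*} (s : Finset ι) (f : ι → ℝ[X]) :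
    gegInt lam (∑ i ∈ s, f i) = ∑ i ∈ s, gegInt lam (f i) := by
  classical
  induction s using Finset.induction_on with
  | empty => simp [gegInt]
  | insert a s ha ih => rw [Finset.sum_insert ha, Finset.sum_insert ha, gegInt_add hlam, ih]

theorem gegInt_sq_nonneg (lam : ℝ) (p : ℝ[X]) : 0 ≤ gegInt lam (p ^ 2) := by
  refine intervalIntegral.integral_nonneg (by norm_num) fun x hx => ?_
  have : 0 ≤ 1 - x ^ 2 := by nlinarith [hx.1, hx.2]
  rw [eval_pow]
  positivity

theorem gegNorm_eval (lam : ℝ) (p : ℝ[X]) :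
    gegNorm lam (fun x => p.eval x) = Real.sqrt (gegInt lam (p ^ 2)) := by
  rw [Real.sqrt_eq_rpow]
  simp only [gegNorm, gegInt, eval_pow]

theorem markovConst_nonneg (lam : ℝ) (n : ℕ) : 0 ≤ markovConst lam n := by
  refine Real.sSup_nonneg ?_
  rintro r ⟨p, -, -, rfl⟩
  rw [gegNorm_eval, gegNorm_eval]
  positivity

theorem markov_ratio_le {lam M : ℝ} {p : ℝ[X]}
    (h : gegInt lam (derivative p ^ 2) ≤ M * gegInt lam (p ^ 2)) :
    gegNorm lam (fun x => (derivative p).eval x) / gegNorm lam (fun x => p.eval x)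
      ≤ Real.sqrt M := by
  rw [gegNorm_eval, gegNorm_eval]
  refine div_le_of_le_mul₀ (Real.sqrt_nonneg _) (Real.sqrt_nonneg _) ?_
  rw [← Real.sqrt_mul' _ (gegInt_sq_nonneg lam p)]
  exact Real.sqrt_le_sqrt h

theorem sq_markovConst_le {lam M : ℝ} {n : ℕ} (hM : 0 ≤ M)
    (h : ∀ p : ℝ[X], p.natDegree ≤ n →
      gegInt lam (derivative p ^ 2) ≤ M * gegInt lam (p ^ 2)) :
    markovConst lam n ^ 2 ≤ M := by
  have : markovConst lam n ≤ Real.sqrt M := by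
    refine csSup_le ⟨_, 1, one_ne_zero, by simp, rfl⟩ ?_
    rintro r ⟨p, -, hp, rfl⟩
    exact markov_ratio_le (h p hp)
  calc markovConst lam n ^ 2 ≤ Real.sqrt M ^ 2 :=
        pow_le_pow_left₀ (markovConst_nonneg lam n) this 2
    _ = M := Real.sq_sqrt hM

theorem gegInt_derivative_sq_le {lam M : ℝ} {n : ℕ}
    (h : ∀ p : ℝ[X], p.natDegree ≤ n →
      gegInt lam (derivative p ^ 2) ≤ M * gegInt lam (p ^ 2))
    {p : ℝ[X]} (hp : p.natDegree ≤ n) (hpos : 0 < gegInt lam (p ^ 2)) :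
    gegInt lam (derivative p ^ 2) ≤ markovConst lam n ^ 2 * gegInt lam (p ^ 2) := by
  have hbdd : BddAbove { r : ℝ | ∃ p : ℝ[X], p ≠ 0 ∧ p.natDegree ≤ n ∧
      r = gegNorm lam (fun x => (derivative p).eval x) / gegNorm lam (fun x => p.eval x) } := by
    refine ⟨Real.sqrt M, ?_⟩
    rintro r ⟨p, -, hp, rfl⟩
    exact markov_ratio_le (h p hp)
  have hp0 : p ≠ 0 := by
    rintro rfl
    simp [gegInt] at hpos
  have h1 : _ ≤ markovConst lam n := le_csSup hbdd ⟨p, hp0, hp, rfl⟩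
  rw [gegNorm_eval, gegNorm_eval, div_le_iff₀ (Real.sqrt_pos.2 hpos)] at h1
  have h2 := pow_le_pow_left₀ (Real.sqrt_nonneg _) h1 2
  rwa [mul_pow, Real.sq_sqrt hpos.le, Real.sq_sqrt (gegInt_sq_nonneg lam _)] at h2

/-- The lower coefficient `n + 2 * lam` of the recurrence, with the value `2` at `n = 0` that makes
`geg` non-degenerate at `lam = 0`. -/
noncomputable def gegCoeff (lam : ℝ) (n : ℕ) : ℝ := if n = 0 then 2 else n + 2 * lam

/-- Gegenbauer polynomials: `geg lam 0 = 1`, and `geg lam n = C_n^{(lam)} / lam` for `n ≥ 1`. -/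
noncomputable def geg (lam : ℝ) : ℕ → ℝ[X]
  | 0 => 1
  | 1 => C 2 * X
  | n + 2 => C (1 / ((n : ℝ) + 2)) *
      (C (2 * (n + 1 + lam)) * X * geg lam (n + 1) - C (gegCoeff lam n) * geg lam n)

theorem geg_recurrence (lam : ℝ) (n : ℕ) :
    C ((n : ℝ) + 2) * geg lam (n + 2) =
      C (2 * (n + 1 + lam)) * X * geg lam (n + 1) - C (gegCoeff lam n) * geg lam n := by
  have : ((n : ℝ) + 2) ≠ 0 := by positivity
  rw [geg, ← mul_assoc, ← C_mul, mul_one_div_cancel this, C_1, one_mul]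

theorem gegCoeff_succ (lam : ℝ) (n : ℕ) : gegCoeff lam (n + 1) = n + 1 + 2 * lam := by
  simp [gegCoeff]

theorem gegCoeff_mul_derivative (lam : ℝ) (n : ℕ) :
    C (gegCoeff lam n) * derivative (geg lam n) =
      C ((n : ℝ) + 2 * lam) * derivative (geg lam n) := by
  rcases n with _ | n
  · simp [geg]
  · simp [gegCoeff]

theorem derivative_geg_relations (lam : ℝ) (n : ℕ) :
    derivative (geg lam (n + 1)) =
        X * derivative (geg lam n) + C (gegCoeff lam n) * geg lam n ∧
      X * derivative (geg lam (n + 1)) - derivative (geg lam n) =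
        C ((n : ℝ) + 1) * geg lam (n + 1) := by
  induction n with
  | zero => simp [geg, gegCoeff, X_mul_C]
  | succ n ih =>
    obtain ⟨h1, h2⟩ := ih
    have hr := geg_recurrence lam n
    have hd := congrArg derivative hr
    simp only [derivative_mul, derivative_sub, derivative_C, derivative_X, zero_mul, zero_add,
      mul_one] at hd
    have hn : (C ((n : ℝ) + 2) : ℝ[X]) ≠ 0 := C_ne_zero.2 (by positivity)
    rw [gegCoeff_mul_derivative] at hd
    have h3 : derivative (geg lam (n + 2)) =
        X * derivative (geg lam (n + 1)) + C (gegCoeff lam (n + 1)) * geg lam (n + 1) := by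
      refine mul_left_cancel₀ hn ?_
      rw [hd, gegCoeff_succ]
      simp only [map_add, map_mul, map_one, map_ofNat] at h2 ⊢
      linear_combination (C (n : ℝ) + 2 * C lam) * h2
    refine ⟨h3, ?_⟩
    rw [h3, gegCoeff_succ]
    push_cast
    simp only [map_add, map_mul, map_one, map_ofNat] at h2 hr ⊢
    linear_combination X * h2 - h1 - hr

theorem derivative_geg_add_two (lam : ℝ) (n : ℕ) :
    derivative (geg lam (n + 2)) =
      derivative (geg lam n) + C (2 * (n + 1 + lam)) * geg lam (n + 1) := by
  have h1 := (derivative_geg_relations lam (n + 1)).1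
  have h2 := (derivative_geg_relations lam n).2
  rw [gegCoeff_succ] at h1
  simp only [map_add, map_mul, map_one, map_ofNat] at h1 h2 ⊢
  linear_combination h1 + h2

theorem geg_ode (lam : ℝ) (n : ℕ) :
    (1 - X ^ 2) * derivative (derivative (geg lam n)) - C (2 * lam + 1) * X * derivative (geg lam n)
      = - C (n * (n + 2 * lam)) * geg lam n := by
  rcases n with _ | n
  · simp [geg]
  · obtain ⟨h1, h2⟩ := derivative_geg_relations lam n
    have hg := gegCoeff_mul_derivative lam n
    have hd := congrArg derivative h1
    have hd2 := congrArg derivative h2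
    simp only [derivative_mul, derivative_sub, derivative_add, derivative_C, derivative_X,
      zero_mul, zero_add, one_mul] at hd hd2
    push_cast
    simp only [map_add, map_mul, map_one, map_ofNat] at h2 hg hd2 ⊢
    linear_combination -X * hd2 + hd + hg - (C (n : ℝ) + 1 + 2 * C lam) * h2

/-- The squared norm of `geg lam n`. -/
noncomputable def gegSq (lam : ℝ) (n : ℕ) : ℝ := gegInt lam (geg lam n * geg lam n)

theorem gegInt_geg_mul_geg_eq {lam : ℝ} (hlam : -(1/2 : ℝ) < lam) (n m : ℕ) :
    n * (n + 2 * lam) * gegInt lam (geg lam n * geg lam m) =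
      gegInt lam ((1 - X ^ 2) * (derivative (geg lam n) * derivative (geg lam m))) := by
  have h := gegInt_parts hlam (derivative (geg lam n) * geg lam m)
  have e : (1 - X ^ 2) * derivative (derivative (geg lam n) * geg lam m) -
      C (2 * lam + 1) * X * (derivative (geg lam n) * geg lam m) =
      (1 - X ^ 2) * (derivative (geg lam n) * derivative (geg lam m)) -
        C (n * (n + 2 * lam)) * (geg lam n * geg lam m) := by
    rw [derivative_mul]
    linear_combination geg lam m * geg_ode lam n
  rw [e, gegInt_sub hlam, gegInt_smul] at h
  linarith

theorem gegInt_geg_mul_geg {lam : ℝ} (hlam : -(1/2 : ℝ) < lam) {n m : ℕ} (hnm : n ≠ m) :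
    gegInt lam (geg lam n * geg lam m) = 0 := by
  have h1 := gegInt_geg_mul_geg_eq hlam n m
  have h2 := gegInt_geg_mul_geg_eq hlam m n
  rw [mul_comm (geg lam m), mul_comm (derivative (geg lam m)), ← h1] at h2
  have h3 : ((n : ℝ) - m) * (n + m + 2 * lam) * gegInt lam (geg lam n * geg lam m) = 0 := by
    linear_combination -h2
  have h4 : (n : ℝ) - m ≠ 0 := sub_ne_zero.2 (by exact_mod_cast hnm)
  have h5 : (1 : ℝ) ≤ n + m := by exact_mod_cast (by omega : 1 ≤ n + m)
  have h6 : (n : ℝ) + m + 2 * lam ≠ 0 := by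
    have : 0 < (n : ℝ) + m + 2 * lam := by linarith
    exact this.ne'
  exact (mul_eq_zero.1 h3).resolve_left (mul_ne_zero h4 h6)

theorem gegInt_X_mul {lam : ℝ} (hlam : -(1/2 : ℝ) < lam) (n : ℕ) :
    2 * (n + 1 + lam) * gegInt lam (X * geg lam n * geg lam (n + 1)) =
      gegCoeff lam n * gegSq lam n := by
  have h := gegInt_geg_mul_geg hlam (show n ≠ n + 2 by omega)
  have e : C (2 * (n + 1 + lam)) * (X * geg lam n * geg lam (n + 1)) =
      C ((n : ℝ) + 2) * (geg lam n * geg lam (n + 2)) +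
        C (gegCoeff lam n) * (geg lam n * geg lam n) := by
    linear_combination (-geg lam n) * geg_recurrence lam n
  have := congrArg (gegInt lam) e
  rw [gegInt_add hlam, gegInt_smul, gegInt_smul, gegInt_smul, h] at this
  rw [gegSq]
  linarith

theorem gegSq_one {lam : ℝ} (hlam : -(1/2 : ℝ) < lam) :
    (1 + lam) * gegSq lam 1 = 2 * gegSq lam 0 := by
  have h := gegInt_X_mul hlam 0
  have e : X * geg lam 0 * geg lam (0 + 1) = C (1 / 2) * (geg lam 1 * geg lam 1) := by
    have : (C (1 / 2) * C 2 : ℝ[X]) = 1 := by rw [← C_mul]; norm_num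
    simp only [geg]
    linear_combination (-X * C 2 * X) * this
  rw [e, gegInt_smul] at h
  simp only [gegCoeff, Nat.cast_zero, if_true] at h
  simp only [gegSq] at h ⊢
  linarith

theorem gegSq_succ {lam : ℝ} (hlam : -(1/2 : ℝ) < lam) (n : ℕ) :
    ((n : ℝ) + 2) * ((n + 2 + lam) * gegSq lam (n + 2)) =
      (n + 1 + 2 * lam) * ((n + 1 + lam) * gegSq lam (n + 1)) := by
  have h := gegInt_X_mul hlam (n + 1)
  have h0 := gegInt_geg_mul_geg hlam (show n ≠ n + 2 by omega)
  have e : C (2 * (n + 1 + lam)) * (X * geg lam (n + 1) * geg lam (n + 2)) =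
      C ((n : ℝ) + 2) * (geg lam (n + 2) * geg lam (n + 2)) +
        C (gegCoeff lam n) * (geg lam n * geg lam (n + 2)) := by
    linear_combination (-geg lam (n + 2)) * geg_recurrence lam n
  have := congrArg (gegInt lam) e
  rw [gegInt_add hlam, gegInt_smul, gegInt_smul, gegInt_smul, h0] at this
  rw [gegCoeff_succ] at h
  push_cast at h
  simp only [gegSq] at h ⊢
  linear_combination (n + 1 + lam) * h - (n + 2 + lam) * this

theorem gegSq_pos {lam : ℝ} (hlam : -(1/2 : ℝ) < lam) (n : ℕ) : 0 < gegSq lam n := by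
  have h0 : 0 < gegSq lam 0 := by simpa [gegSq, geg] using gegInt_one_pos hlam
  rcases n with _ | n
  · exact h0
  induction n with
  | zero =>
    have h1 := gegSq_one hlam
    exact pos_of_mul_pos_right (h1 ▸ (by linarith : 0 < 2 * gegSq lam 0)) (by linarith)
  | succ n ih =>
    have h1 := gegSq_succ hlam n
    have hn : (0 : ℝ) ≤ n := Nat.cast_nonneg n
    have h2 : 0 < (n + 1 + 2 * lam) * ((n + 1 + lam) * gegSq lam (n + 1)) :=
      mul_pos (by linarith) (mul_pos (by linarith) ih)
    rw [← h1] at h2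
    exact pos_of_mul_pos_right (pos_of_mul_pos_right h2 (by linarith)) (by linarith)

theorem gegInt_sum_sq {lam : ℝ} (hlam : -(1/2 : ℝ) < lam) (c : ℕ → ℝ) (N : ℕ) :
    gegInt lam ((∑ k ∈ Finset.range N, C (c k) * geg lam k) ^ 2) =
      ∑ k ∈ Finset.range N, c k ^ 2 * gegSq lam k := by
  rw [sq, Finset.sum_mul_sum, gegInt_sum hlam]
  refine Finset.sum_congr rfl fun k hk => ?_
  rw [gegInt_sum hlam, Finset.sum_eq_single_of_mem k hk]
  · rw [mul_mul_mul_comm, ← C_mul, gegInt_smul, gegSq, sq]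
  · intro l _ hl
    rw [mul_mul_mul_comm, ← C_mul, gegInt_smul, gegInt_geg_mul_geg hlam hl.symm, mul_zero]

theorem geg_natDegree_le_and_coeff_ne_zero {lam : ℝ} (hlam : -(1/2 : ℝ) < lam) (n : ℕ) :
    (geg lam n).natDegree ≤ n ∧ (geg lam n).coeff n ≠ 0 := by
  induction n using Nat.twoStepInduction with
  | zero => simp [geg]
  | one => exact ⟨by rw [geg]; exact (natDegree_C_mul_le _ _).trans natDegree_X_le, by simp [geg]⟩
  | more n ih1 ih2 =>
    constructor
    · rw [geg]
      refine (natDegree_C_mul_le _ _).trans ((natDegree_sub_le _ _).trans (max_le ?_ ?_))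
      · refine natDegree_mul_le.trans ?_
        have := (natDegree_C_mul_le (2 * ((n : ℝ) + 1 + lam)) X).trans natDegree_X_le
        have := ih2.1
        omega
      · exact (natDegree_C_mul_le _ _).trans (by omega)
    · rw [geg, coeff_C_mul, coeff_sub, coeff_C_mul, mul_assoc, coeff_C_mul, coeff_X_mul,
        coeff_eq_zero_of_natDegree_lt (show (geg lam n).natDegree < n + 2 by omega),
        mul_zero, sub_zero]
      have hn : (0 : ℝ) ≤ n := Nat.cast_nonneg n
      have h1 : 0 < 1 / ((n : ℝ) + 2) := by positivity
      have h2 : 0 < 2 * ((n : ℝ) + 1 + lam) := by linarith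
      exact mul_ne_zero h1.ne' (mul_ne_zero h2.ne' ih2.2)

theorem exists_eq_sum_geg {lam : ℝ} (hlam : -(1/2 : ℝ) < lam) (n : ℕ) (p : ℝ[X])
    (hp : p.natDegree < n) :
    ∃ a : ℕ → ℝ, p = ∑ k ∈ Finset.range n, C (a k) * geg lam k := by
  induction n generalizing p with
  | zero => omega
  | succ n ih =>
    obtain ⟨h1, h2⟩ := geg_natDegree_le_and_coeff_ne_zero hlam n
    set c := p.coeff n / (geg lam n).coeff n
    have hq1 : (p - C c * geg lam n).natDegree ≤ n :=
      (natDegree_sub_le _ _).trans (max_le (by omega) ((natDegree_C_mul_le _ _).trans h1))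
    have hq2 : (p - C c * geg lam n).coeff n = 0 := by
      rw [coeff_sub, coeff_C_mul, div_mul_cancel₀ _ h2, sub_self]
    rcases Nat.eq_zero_or_pos n with rfl | hn
    · refine ⟨fun _ => c, ?_⟩
      have := eq_C_of_natDegree_le_zero hq1
      rw [hq2, C_0, sub_eq_zero] at this
      simpa using this
    · have hlt : (p - C c * geg lam n).natDegree < n := by
        refine lt_of_le_of_ne hq1 fun h => ?_
        have h3 : (p - C c * geg lam n).leadingCoeff = 0 := by rw [leadingCoeff, h, hq2]
        rw [leadingCoeff_eq_zero.1 h3, natDegree_zero] at h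
        omega
      obtain ⟨a, ha⟩ := ih _ hlt
      refine ⟨Function.update a n c, ?_⟩
      rw [Finset.sum_range_succ, Function.update_self, ← sub_eq_iff_eq_add, ha]
      refine Finset.sum_congr rfl fun k hk => ?_
      rw [Function.update_of_ne (Finset.mem_range.1 hk).ne]

/-- Exchange of summation over the triangle `i ≤ k < m`. -/
theorem sum_mul_sum_range_succ {R : Type*} [CommSemiring R] (x y : ℕ → R) (m : ℕ) :
    ∑ k ∈ Finset.range m, x k * ∑ i ∈ Finset.range (k + 1), y i =
      ∑ i ∈ Finset.range m, (∑ k ∈ Finset.Ico i m, x k) * y i := by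
  simp only [Finset.mul_sum, Finset.sum_mul]
  refine Finset.sum_comm' fun k i => ?_
  simp only [Finset.mem_range, Finset.mem_Ico]
  omega

theorem sum_range_two_mul {R : Type*} [AddCommMonoid R] (f : ℕ → R) (m : ℕ) :
    ∑ k ∈ Finset.range (2 * m), f k =
      ∑ i ∈ Finset.range m, f (2 * i) + ∑ i ∈ Finset.range m, f (2 * i + 1) := by
  induction m with
  | zero => simp
  | succ m ih =>
    rw [mul_add_one, Finset.sum_range_succ, Finset.sum_range_succ, ih, Finset.sum_range_succ,
      Finset.sum_range_succ]
    abel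

/-- The coefficients in `geg lam (n + 1)' = ∑ gegDerivCoeff lam j * geg lam j`, where `j` runs over
`n, n - 2, …`. -/
noncomputable def gegDerivCoeff (lam : ℝ) (n : ℕ) : ℝ := if n = 0 then 2 else 2 * (n + lam)

theorem derivative_geg {lam : ℝ} {r : ℕ} (hr : r < 2) (k : ℕ) :
    derivative (geg lam (2 * k + r + 1)) =
      ∑ i ∈ Finset.range (k + 1), C (gegDerivCoeff lam (2 * i + r)) * geg lam (2 * i + r) := by
  induction k with
  | zero =>
    interval_cases r
    · simp [geg, gegDerivCoeff]
    · have := derivative_geg_add_two lam 0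
      simpa [gegDerivCoeff, geg] using this
  | succ k ih =>
    rw [Finset.sum_range_succ, ← ih]
    have := derivative_geg_add_two lam (2 * k + r + 1)
    rw [show 2 * (k + 1) + r + 1 = 2 * k + r + 1 + 2 by ring, this,
      show 2 * (k + 1) + r = 2 * k + r + 1 + 1 by ring]
    simp [gegDerivCoeff]

theorem derivative_sum_geg {lam : ℝ} {r : ℕ} (hr : r < 2) (x : ℕ → ℝ) (m : ℕ) :
    derivative (∑ k ∈ Finset.range m, C (x k) * geg lam (2 * k + r + 1)) =
      ∑ i ∈ Finset.range m,
        C (gegDerivCoeff lam (2 * i + r) * ∑ k ∈ Finset.Ico i m, x k) * geg lam (2 * i + r) := by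
  simp only [derivative_sum, derivative_C_mul, derivative_geg hr]
  rw [sum_mul_sum_range_succ (fun k => C (x k))]
  refine Finset.sum_congr rfl fun i _ => ?_
  rw [C_mul, map_sum]
  ring

/-- The weights on the derivative side of the Hardy inequality, on indices of parity `r`. -/
noncomputable def hardyLeft (lam : ℝ) (r i : ℕ) : ℝ :=
  gegDerivCoeff lam (2 * i + r) ^ 2 * gegSq lam (2 * i + r)

/-- The weights on the function side of the Hardy inequality, on indices of parity `r + 1`. -/
noncomputable def hardyRight (lam : ℝ) (r i : ℕ) : ℝ := gegSq lam (2 * i + r + 1)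

theorem gegInt_sum_sq_split {lam : ℝ} (hlam : -(1/2 : ℝ) < lam) (a : ℕ → ℝ) (m : ℕ) :
    gegInt lam ((∑ k ∈ Finset.range (2 * m + 1), C (a k) * geg lam k) ^ 2) =
      a 0 ^ 2 * gegSq lam 0 +
      (∑ i ∈ Finset.range m, hardyRight lam 0 i * a (2 * i + 1) ^ 2 +
        ∑ i ∈ Finset.range m, hardyRight lam 1 i * a (2 * i + 2) ^ 2) := by
  rw [gegInt_sum_sq hlam, Finset.sum_range_succ', sum_range_two_mul, add_comm]
  simp only [hardyRight, mul_comm, add_zero]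

theorem gegInt_derivative_sum_sq_split {lam : ℝ} (hlam : -(1/2 : ℝ) < lam) (a : ℕ → ℝ) (m : ℕ) :
    gegInt lam ((derivative (∑ k ∈ Finset.range (2 * m + 1), C (a k) * geg lam k)) ^ 2) =
      ∑ i ∈ Finset.range m, hardyLeft lam 0 i * (∑ k ∈ Finset.Ico i m, a (2 * k + 1)) ^ 2 +
        ∑ i ∈ Finset.range m, hardyLeft lam 1 i * (∑ k ∈ Finset.Ico i m, a (2 * k + 2)) ^ 2 := by
  have h0 := derivative_sum_geg (lam := lam) (r := 0) (by norm_num) (fun k => a (2 * k + 1)) m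
  have h1 := derivative_sum_geg (lam := lam) (r := 1) (by norm_num) (fun k => a (2 * k + 2)) m
  set c : ℕ → ℝ := fun k =>
    gegDerivCoeff lam k * ∑ i ∈ Finset.Ico (k / 2) m, a (2 * i + k % 2 + 1) with hc
  have e0 : ∀ i, c (2 * i) =
      gegDerivCoeff lam (2 * i) * ∑ k ∈ Finset.Ico i m, a (2 * k + 1) := fun i => by
    simp [hc]
  have e1 : ∀ i, c (2 * i + 1) =
      gegDerivCoeff lam (2 * i + 1) * ∑ k ∈ Finset.Ico i m, a (2 * k + 2) := fun i => by
    simp only [hc, show (2 * i + 1) / 2 = i by omega, show (2 * i + 1) % 2 = 1 by omega]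
  have hd : derivative (∑ k ∈ Finset.range (2 * m + 1), C (a k) * geg lam k) =
      ∑ k ∈ Finset.range (2 * m), C (c k) * geg lam k := by
    rw [Finset.sum_range_succ', sum_range_two_mul, sum_range_two_mul, derivative_add,
      derivative_add]
    simp only [add_zero] at h0
    simp only [e0, e1, add_assoc, Nat.reduceAdd] at h0 h1 ⊢
    rw [h0, h1]
    simp [geg]
  rw [hd, gegInt_sum_sq hlam, sum_range_two_mul]
  simp only [e0, e1, hardyLeft, add_zero, mul_pow]
  congr 1 <;> exact Finset.sum_congr rfl fun i _ => by ring

theorem gegSq_eq_prod {lam : ℝ} (hlam : -(1/2 : ℝ) < lam) (n : ℕ) :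
    ((n : ℝ) + 1 + lam) * gegSq lam (n + 1) * (n + 1).factorial =
      2 * gegSq lam 0 * ∏ j ∈ Finset.range n, (2 * lam + 1 + j) := by
  induction n with
  | zero => simpa using gegSq_one hlam
  | succ n ih =>
    have h := gegSq_succ hlam n
    rw [Finset.prod_range_succ, ← mul_assoc, ← ih, Nat.factorial_succ (n + 1)]
    push_cast
    linear_combination ((n + 1).factorial : ℝ) * h

theorem gegSq_powAsymp {lam : ℝ} (hlam : -(1/2 : ℝ) < lam) :
    ∃ c, 0 < c ∧ PowAsymp (gegSq lam) (2 * lam - 2) c := by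
  have hs : 0 < 2 * lam + 1 := by linarith
  have hΓ := Real.Gamma_pos_of_pos hs
  have h0 := gegSq_pos hlam 0
  refine ⟨2 * gegSq lam 0 / Real.Gamma (2 * lam + 1), by positivity, ?_⟩
  have h1 : PowAsymp (fun n : ℕ => (n : ℝ) ^ (2 * lam + 1) / Real.GammaSeq (2 * lam + 1) n)
      (2 * lam + 1 - 0) (1 / Real.Gamma (2 * lam + 1)) := by
    refine (PowAsymp.rpow _).div ?_ hΓ.ne'
    simpa [PowAsymp] using Real.GammaSeq_tendsto_Gamma (2 * lam + 1)
  have hlin : ∀ t : ℝ, PowAsymp (fun n : ℕ => (n : ℝ) + t) 1 1 := fun t => by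
    have : Tendsto (fun n : ℕ => (1 : ℝ) + t * (n : ℝ)⁻¹) atTop (nhds (1 + t * 0)) :=
      (tendsto_inv_atTop_nhds_zero_nat.const_mul t).const_add 1
    rw [mul_zero, add_zero] at this
    refine Tendsto.congr' ?_ this
    filter_upwards [eventually_gt_atTop 0] with n hn
    have hn' : (0 : ℝ) < n := by exact_mod_cast hn
    rw [Real.rpow_one]
    field_simp
  have h2 := (h1.const_mul (2 * gegSq lam 0)).div
    (((hlin 1).mul (hlin 2)).mul (hlin (2 + lam))) (by norm_num)
  have h3 : PowAsymp (fun n => gegSq lam (n + 2)) (2 * lam - 2)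
      (2 * gegSq lam 0 / Real.Gamma (2 * lam + 1)) := by
    have e : 2 * lam + 1 - 0 - (1 + 1 + 1) = 2 * lam - 2 := by ring
    rw [e] at h2
    have e2 : 2 * gegSq lam 0 * (1 / Real.Gamma (2 * lam + 1)) / (1 * 1 * 1) =
      2 * gegSq lam 0 / Real.Gamma (2 * lam + 1) := by ring
    rw [e2] at h2
    refine h2.congr ?_
    filter_upwards [eventually_gt_atTop 0] with n hn
    have hn' : (0 : ℝ) < n := by exact_mod_cast hn
    have h := gegSq_eq_prod hlam (n + 1)
    have hprod : 0 < ∏ j ∈ Finset.range (n + 1), (2 * lam + 1 + j) :=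
      Finset.prod_pos fun j _ => by positivity
    rw [Nat.factorial_succ, Nat.factorial_succ] at h
    push_cast at h
    have hf : (0 : ℝ) < n.factorial := by exact_mod_cast n.factorial_pos
    have hr := Real.rpow_pos_of_pos hn' (2 * lam + 1)
    have hl : (n : ℝ) + (2 + lam) ≠ 0 := by
      have : 0 < (n : ℝ) + (2 + lam) := by linarith
      exact this.ne'
    rw [Real.GammaSeq]
    field_simp
    linear_combination -h
  have h4 : Tendsto (fun n : ℕ => n - 2) atTop atTop := tendsto_sub_atTop_nat 2
  have h5 : Tendsto (fun n : ℕ => ((n - 2 : ℕ) : ℝ) / n) atTop (nhds 1) := by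
    have := (hlin (-2))
    refine Tendsto.congr' ?_ this
    filter_upwards [eventually_ge_atTop 2] with n hn
    rw [Nat.cast_sub hn, Real.rpow_one]
    simp [sub_eq_add_neg]
  have h6 := h3.comp one_pos h4 h5
  rw [Real.one_rpow, mul_one] at h6
  refine h6.congr ?_
  filter_upwards [eventually_ge_atTop 2] with n hn
  rw [Nat.sub_add_cancel hn]

theorem hardy_weights_powAsymp {lam : ℝ} (hlam : -(1/2 : ℝ) < lam) :
    ∃ D, 0 < D ∧ ∀ r, PowAsymp (hardyLeft lam r) (2 * lam) (16 * D) ∧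
      PowAsymp (hardyRight lam r) (2 * lam - 2) D := by
  obtain ⟨c, hc, h⟩ := gegSq_powAsymp hlam
  refine ⟨c * 2 ^ (2 * lam - 2), by positivity, fun r => ⟨?_, ?_⟩⟩
  · have h1 : PowAsymp (gegDerivCoeff lam) 1 2 := by
      have : Tendsto (fun n : ℕ => (2 : ℝ) + 2 * lam * (n : ℝ)⁻¹) atTop
          (nhds (2 + 2 * lam * 0)) :=
        (tendsto_inv_atTop_nhds_zero_nat.const_mul _).const_add 2
      rw [mul_zero, add_zero] at this
      refine Tendsto.congr' ?_ this
      filter_upwards [eventually_gt_atTop 0] with n hn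
      have hn' : (0 : ℝ) < n := by exact_mod_cast hn
      rw [Real.rpow_one, gegDerivCoeff, if_neg hn.ne']
      field_simp
    have h2 := ((h1.mul h1).mul h).affine two_pos r
    have e : (1 : ℝ) + 1 + (2 * lam - 2) = 2 * lam := by ring
    have e2 : 2 * 2 * c * ((2 : ℕ) : ℝ) ^ (2 * lam) = 16 * (c * 2 ^ (2 * lam - 2)) := by
      rw [Real.rpow_sub two_pos]
      norm_num
      ring
    rw [e, e2] at h2
    exact h2.congr (Eventually.of_forall fun i => by rw [hardyLeft, sq])
  · exact h.affine two_pos (r + 1)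

theorem hardyLeft_nonneg {lam : ℝ} (hlam : -(1/2 : ℝ) < lam) (r i : ℕ) :
    0 ≤ hardyLeft lam r i :=
  mul_nonneg (sq_nonneg _) (gegSq_pos hlam _).le

theorem hardyRight_pos {lam : ℝ} (hlam : -(1/2 : ℝ) < lam) (r i : ℕ) : 0 < hardyRight lam r i :=
  gegSq_pos hlam _

/-- Frobenius norm bound for the Hardy operator. -/
theorem hardy_frobenius {b H : ℕ → ℝ} (hH : ∀ i, 0 < H i) (m : ℕ)
    (x : ℕ → ℝ) :
    (∑ i ∈ Finset.range m, b i * (∑ k ∈ Finset.Ico i m, x k) ^ 2) ^ 2 ≤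
      (∑ k ∈ Finset.range m, H k * x k ^ 2) ^ 2 *
        (2 * ∑ k ∈ Finset.range m,
          (∑ l ∈ Finset.range (k + 1), (∑ i ∈ Finset.range (l + 1), b i) ^ 2 / H l) / H k) := by
  set S : ℕ → ℝ := fun l => ∑ i ∈ Finset.range (l + 1), b i with hS
  have hexp : ∑ i ∈ Finset.range m, b i * (∑ k ∈ Finset.Ico i m, x k) ^ 2 =
      ∑ z ∈ Finset.range m ×ˢ Finset.range m, x z.1 * x z.2 * S (min z.1 z.2) := by
    have hsq : ∀ i, b i * (∑ k ∈ Finset.Ico i m, x k) ^ 2 =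
        ∑ z ∈ Finset.Ico i m ×ˢ Finset.Ico i m, x z.1 * x z.2 * b i := fun i => by
      rw [← Finset.sum_mul, sq, Finset.sum_mul_sum, Finset.sum_product, mul_comm]
    simp only [hsq, hS, Finset.mul_sum]
    refine Finset.sum_comm' fun i z => ?_
    simp only [Finset.mem_product, Finset.mem_range, Finset.mem_Ico]
    omega
  have hcs := Finset.sum_sq_le_sum_mul_sum_of_sq_le_mul (Finset.range m ×ˢ Finset.range m)
    (r := fun z => x z.1 * x z.2 * S (min z.1 z.2))
    (f := fun z => (H z.1 * x z.1 ^ 2) * (H z.2 * x z.2 ^ 2))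
    (g := fun z => S (min z.1 z.2) ^ 2 / (H z.1 * H z.2))
    (fun z _ => by have := hH z.1; have := hH z.2; positivity)
    (fun z _ => by have := hH z.1; have := hH z.2; positivity)
    (fun z _ => le_of_eq (by have := (hH z.1).ne'; have := (hH z.2).ne'; field_simp))
  rw [hexp]
  refine hcs.trans ?_
  have hf : ∑ z ∈ Finset.range m ×ˢ Finset.range m, (H z.1 * x z.1 ^ 2) * (H z.2 * x z.2 ^ 2) =
      (∑ k ∈ Finset.range m, H k * x k ^ 2) ^ 2 := by
    rw [sq, Finset.sum_mul_sum, Finset.sum_product]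
  rw [hf]
  refine mul_le_mul_of_nonneg_left ?_ (sq_nonneg _)
  set t : ℕ → ℕ → ℝ := fun k l => if l < k + 1 then S l ^ 2 / H l / H k else 0 with ht
  have hsum : ∀ k ∈ Finset.range m,
      ∑ l ∈ Finset.range m, t k l = (∑ l ∈ Finset.range (k + 1), S l ^ 2 / H l) / H k := by
    intro k hk
    rw [Finset.sum_div, ← Finset.sum_filter]
    refine Finset.sum_congr ?_ fun _ _ => rfl
    ext l
    simp only [Finset.mem_filter, Finset.mem_range] at hk ⊢
    omega
  have ht0 : ∀ k l, 0 ≤ t k l := fun k l => by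
    have := hH k
    have := hH l
    simp only [ht]
    split_ifs <;> positivity
  have hpt : ∀ k l, S (min k l) ^ 2 / (H k * H l) ≤ t k l + t l k := fun k l => by
    rcases le_total l k with h | h
    · have h1 : t k l = S (min k l) ^ 2 / (H k * H l) := by
        simp only [ht, if_pos (Nat.lt_succ_of_le h), min_eq_right h, div_div, mul_comm]
      linarith [ht0 l k]
    · have h1 : t l k = S (min k l) ^ 2 / (H k * H l) := by
        simp only [ht, if_pos (Nat.lt_succ_of_le h), min_eq_left h, div_div]
      linarith [ht0 k l]
  calc ∑ z ∈ Finset.range m ×ˢ Finset.range m, S (min z.1 z.2) ^ 2 / (H z.1 * H z.2)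
      ≤ ∑ z ∈ Finset.range m ×ˢ Finset.range m, (t z.1 z.2 + t z.2 z.1) :=
        Finset.sum_le_sum fun z _ => hpt z.1 z.2
    _ = 2 * ∑ k ∈ Finset.range m, ∑ l ∈ Finset.range m, t k l := by
        rw [Finset.sum_add_distrib, Finset.sum_product, Finset.sum_product_right, two_mul]
    _ = _ := by rw [Finset.sum_congr rfl hsum]

/-- Schur test for the Hardy operator. -/
theorem hardy_schur {b H f : ℕ → ℝ} (hb : ∀ i, 0 ≤ b i) (hf : ∀ i, 0 < f i) {M : ℝ} {m : ℕ}
    (h : ∀ k < m, ∑ i ∈ Finset.range (k + 1), b i * ∑ l ∈ Finset.Ico i m, f l ≤ M * (f k * H k))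
    (x : ℕ → ℝ) :
    ∑ i ∈ Finset.range m, b i * (∑ k ∈ Finset.Ico i m, x k) ^ 2 ≤
      M * ∑ k ∈ Finset.range m, H k * x k ^ 2 := by
  calc ∑ i ∈ Finset.range m, b i * (∑ k ∈ Finset.Ico i m, x k) ^ 2
      ≤ ∑ i ∈ Finset.range m,
          (∑ k ∈ Finset.Ico i m, x k ^ 2 / f k) * (b i * ∑ l ∈ Finset.Ico i m, f l) := by
        refine Finset.sum_le_sum fun i _ => ?_
        have := Finset.sum_sq_le_sum_mul_sum_of_sq_le_mul (Finset.Ico i m) (r := x)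
          (f := fun k => x k ^ 2 / f k) (g := f)
          (fun k _ => by have := hf k; positivity) (fun k _ => (hf k).le)
          (fun k _ => le_of_eq (by have := (hf k).ne'; field_simp))
        calc _ ≤ b i * _ := mul_le_mul_of_nonneg_left this (hb i)
          _ = _ := by ring
    _ = ∑ k ∈ Finset.range m, x k ^ 2 / f k *
          ∑ i ∈ Finset.range (k + 1), b i * ∑ l ∈ Finset.Ico i m, f l :=
        (sum_mul_sum_range_succ (fun k => x k ^ 2 / f k) _ m).symm
    _ ≤ ∑ k ∈ Finset.range m, x k ^ 2 / f k * (M * (f k * H k)) := by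
        refine Finset.sum_le_sum fun k hk => ?_
        have := hf k
        exact mul_le_mul_of_nonneg_left (h k (Finset.mem_range.1 hk)) (by positivity)
    _ = M * ∑ k ∈ Finset.range m, H k * x k ^ 2 := by
        rw [Finset.mul_sum]
        refine Finset.sum_congr rfl fun k _ => ?_
        have := (hf k).ne'
        field_simp

/-- The Hardy inequality with weights `b`, `H` holds on `m` terms with constant asymptotically
at most `K * m ^ 4`. -/
def HardyBound (b H : ℕ → ℝ) (K : ℝ) : Prop :=
  ∀ ε > 0, ∀ᶠ m : ℕ in atTop, ∀ x : ℕ → ℝ,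
    ∑ i ∈ Finset.range m, b i * (∑ k ∈ Finset.Ico i m, x k) ^ 2 ≤
      (K + ε) * (m : ℝ) ^ 4 * ∑ k ∈ Finset.range m, H k * x k ^ 2

theorem hardyBound_frobenius {lam D : ℝ} (hlam : -(1/2 : ℝ) < lam) (hD : 0 < D) {b H : ℕ → ℝ}
    (hH : ∀ i, 0 < H i) (hba : PowAsymp b (2 * lam) (16 * D))
    (hHa : PowAsymp H (2 * lam - 2) D) :
    HardyBound b H (16 * (1 / (2 * (2 * lam + 1) * Real.sqrt (2 * lam + 5)))) := by
  have h1 : 0 < 2 * lam + 1 := by linarith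
  have h5 : 0 < 2 * lam + 5 := by linarith
  have hs5 := Real.sqrt_pos.2 h5
  have hS := (hba.sum_range (by linarith)).shift 1
  have hT := (((hS.mul hS).div hHa hD.ne').sum_range (by linarith)).shift 1
  have hF := ((hT.div hHa hD.ne').sum_range (by linarith)).const_mul 2
  set K := 16 * (1 / (2 * (2 * lam + 1) * Real.sqrt (2 * lam + 5))) with hK
  have hK0 : 0 < K := by positivity
  have e1 : 2 * lam + 1 + (2 * lam + 1) - (2 * lam - 2) + 1 - (2 * lam - 2) + 1 = ((8 : ℕ) : ℝ) := by
    push_cast; ring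
  have e2 : 2 * (16 * D / (2 * lam + 1) * (16 * D / (2 * lam + 1)) / D /
      (2 * lam + 1 + (2 * lam + 1) - (2 * lam - 2) + 1) / D /
      (2 * lam + 1 + (2 * lam + 1) - (2 * lam - 2) + 1 - (2 * lam - 2) + 1)) = K ^ 2 := by
    rw [e1, show 2 * lam + 1 + (2 * lam + 1) - (2 * lam - 2) + 1 = 2 * lam + 5 by ring, hK,
      mul_pow, div_pow, mul_pow, Real.sq_sqrt h5.le]
    push_cast
    field_simp
    norm_num
  rw [e2, e1] at hF
  intro ε hε
  have hlt : K ^ 2 < (K + ε) ^ 2 := by nlinarith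
  filter_upwards [Tendsto.eventually_lt_const hlt hF, eventually_gt_atTop 0] with m hm hm0 x
  have hm' : (0 : ℝ) < m := by exact_mod_cast hm0
  rw [Real.rpow_natCast, div_lt_iff₀ (by positivity)] at hm
  have hN : 0 ≤ ∑ k ∈ Finset.range m, H k * x k ^ 2 :=
    Finset.sum_nonneg fun k _ => by have := hH k; positivity
  refine le_of_sq_le_sq ?_ (by positivity)
  refine (hardy_frobenius hH m x).trans ?_
  calc _ ≤ (∑ k ∈ Finset.range m, H k * x k ^ 2) ^ 2 * ((K + ε) ^ 2 * (m : ℝ) ^ 8) := by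
        refine mul_le_mul_of_nonneg_left ?_ (sq_nonneg _)
        simpa only [sq] using hm.le
    _ = _ := by ring

theorem young_pow_four {q τ : ℝ} (hq : 0 < q) (hτ : 0 ≤ τ) :
    τ ^ 4 ≤ 4 / (4 + q) * τ ^ (4 + q) + q / (4 + q) := by
  have h4q : 0 < 4 + q := by linarith
  have h := Real.geom_mean_le_arith_mean2_weighted (w₁ := 4 / (4 + q)) (w₂ := q / (4 + q))
    (p₁ := τ ^ (4 + q)) (p₂ := 1) (by positivity) (by positivity)
    (Real.rpow_nonneg hτ _) zero_le_one (by field_simp)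
  rw [← Real.rpow_mul hτ, mul_div_cancel₀ _ h4q.ne', Real.one_rpow, mul_one, mul_one] at h
  exact_mod_cast h

theorem sum_Ico_sub_succ (g : ℕ → ℝ) {i m : ℕ} (h : i ≤ m) :
    ∑ k ∈ Finset.Ico i m, (g k - g (k + 1)) = g i - g m := by
  induction m, h using Nat.le_induction with
  | base => simp
  | succ m h ih =>
    rw [Finset.sum_Ico_succ_top h, ih]
    ring

theorem hardyBound_schur {lam D : ℝ} (hlam : 2 ≤ lam) (hD : 0 < D) {b H : ℕ → ℝ}
    (hb : ∀ i, 0 ≤ b i) (hH : ∀ i, 0 < H i) (hba : PowAsymp b (2 * lam) (16 * D))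
    (hHa : PowAsymp H (2 * lam - 2) D) :
    HardyBound b H (16 * (1 / ((lam + 2) * (lam + 3)))) := by
  obtain ⟨q, rfl⟩ : ∃ q, lam = q + 1 := ⟨lam - 1, by ring⟩
  have hq : 1 ≤ q := by linarith
  have hq0 : 0 < q := by linarith
  set g : ℕ → ℝ := fun k => ((k + 1 : ℕ) : ℝ) ^ (-q) with hg
  set f : ℕ → ℝ := fun k => g k - g (k + 1) with hfdef
  have hg0 : ∀ k, 0 < g k := fun k => by positivity
  have hf0 : ∀ k, 0 < f k := fun k => sub_pos.2 <|
    Real.rpow_lt_rpow_of_neg (by positivity) (by push_cast; linarith) (by linarith)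
  have hga : PowAsymp g (-q) 1 := PowAsymp.rpow_shift (-q) 1
  have hfa : PowAsymp f (-q - 1) q := by
    have := ((PowAsymp.rpow_succ_sub (-q)).shift 1).const_mul (-1)
    rw [neg_one_mul, neg_neg] at this
    exact this.congr (Eventually.of_forall fun i => by simp [hfdef, hg])
  have hfH := hfa.mul hHa
  have hqD : q * D ≠ 0 := by positivity
  have hY := (((hba.mul hga).sum_range (by linarith)).shift 1).div hfH hqD
  have hZ := ((hba.sum_range (by linarith)).shift 1).div hfH hqD
  set Y : ℕ → ℝ := fun k => (∑ i ∈ Finset.range (k + 1), b i * g i) / (f k * H k) with hYdef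
  set Z : ℕ → ℝ := fun k => (∑ i ∈ Finset.range (k + 1), b i) / (f k * H k) with hZdef
  set A := 16 / ((q + 3) * q) with hA
  set B := 16 / ((2 * q + 3) * q) with hB
  have hY' : PowAsymp Y 4 A := by
    convert hY using 1
    · ring
    · rw [hA]
      have : 2 * (q + 1) + -q + 1 = q + 3 := by ring
      rw [this]
      field_simp
  have hZ' : PowAsymp Z (4 + q) B := by
    convert hZ using 1
    · ring
    · rw [hB]
      have : 2 * (q + 1) + 1 = 2 * q + 3 := by ring
      rw [this]
      field_simp
  set K := 16 * (1 / ((q + 1 + 2) * (q + 1 + 3))) with hK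
  have hyoung : ∀ τ : ℝ, 0 ≤ τ → A * τ ^ 4 - B * τ ^ (4 + q) ≤ K := fun τ hτ => by
    have h1 := young_pow_four hq0 hτ
    have h2 : A * (4 / (4 + q)) ≤ B := by
      rw [hA, hB, div_mul_div_comm, div_le_div_iff₀ (by positivity) (by positivity)]
      nlinarith [mul_nonneg hq0.le (mul_nonneg hq0.le (by linarith : 0 ≤ q - 1))]
    have h3 : A * (q / (4 + q)) = K := by
      rw [hA, hK]
      field_simp
      ring
    have h4 : 0 ≤ τ ^ (4 + q) := Real.rpow_nonneg hτ _
    have h5 : 0 ≤ A := by positivity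
    nlinarith [mul_le_mul_of_nonneg_left h1 h5, mul_le_mul_of_nonneg_right h2 h4]
  intro ε hε
  obtain ⟨K₁, hK₁, hY₁⟩ := hY'.exists_abs_sub_le (show 0 < ε / 8 by linarith)
  obtain ⟨K₂, hK₂, hZ₁⟩ := hZ'.exists_abs_sub_le (show 0 < ε / 8 by linarith)
  have hbound : ∀ m k : ℕ, k < m →
      Y k - g m * Z k ≤ (K + ε / 4) * ((m : ℝ) + 1) ^ 4 + (K₁ + K₂) := fun m k hk => by
    have hM : (0 : ℝ) < (m : ℝ) + 1 := by positivity
    set τ : ℝ := k / ((m : ℝ) + 1) with hτ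
    have hτ0 : 0 ≤ τ := by positivity
    have hkm : (k : ℝ) ≤ m := by exact_mod_cast hk.le
    have hτ1 : τ ≤ 1 := by
      rw [hτ, div_le_one hM]
      linarith
    have ek : (k : ℝ) = ((m : ℝ) + 1) * τ := by rw [hτ]; field_simp
    have egm : g m = ((m : ℝ) + 1) ^ (-q) := by simp [hg]
    have e4 : (k : ℝ) ^ (4 : ℝ) = ((m : ℝ) + 1) ^ 4 * τ ^ 4 := by
      rw [show (4 : ℝ) = ((4 : ℕ) : ℝ) by norm_num, Real.rpow_natCast, ek, mul_pow]
    have eq4 : g m * (k : ℝ) ^ (4 + q) = ((m : ℝ) + 1) ^ 4 * τ ^ (4 + q) := by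
      rw [egm, ek, Real.mul_rpow hM.le hτ0, ← mul_assoc, ← Real.rpow_add hM,
        show -q + (4 + q) = ((4 : ℕ) : ℝ) by push_cast; ring, Real.rpow_natCast]
    have hg1 : g m ≤ 1 := by
      rw [egm]
      exact Real.rpow_le_one_of_one_le_of_nonpos (by linarith [Nat.cast_nonneg (α := ℝ) m])
        (by linarith)
    have hy := (abs_le.1 (hY₁ k)).2
    have hz := (abs_le.1 (hZ₁ k)).1
    rw [e4] at hy
    have hz' := mul_le_mul_of_nonneg_left hz (hg0 m).le
    have hz'' : -(g m * Z k) ≤ - B * (((m : ℝ) + 1) ^ 4 * τ ^ (4 + q)) +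
        ε / 8 * (((m : ℝ) + 1) ^ 4 * τ ^ (4 + q)) + g m * K₂ := by
      rw [← eq4]
      linarith
    have hy0 := mul_le_mul_of_nonneg_left (hyoung τ hτ0) (pow_pos hM 4).le
    have hp1 : τ ^ 4 ≤ 1 := pow_le_one₀ hτ0 hτ1
    have hp2 : τ ^ (4 + q) ≤ 1 := Real.rpow_le_one hτ0 hτ1 (by linarith)
    have hε8 : 0 ≤ ε / 8 * ((m : ℝ) + 1) ^ 4 := by positivity
    have hq1 := mul_le_mul_of_nonneg_left hp1 hε8
    have hq2 := mul_le_mul_of_nonneg_left hp2 hε8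
    have hq3 := mul_le_mul_of_nonneg_right hg1 hK₂
    linarith
  have hlim : Tendsto (fun m : ℕ => ((K + ε / 4) * ((m : ℝ) + 1) ^ 4 + (K₁ + K₂)) / (m : ℝ) ^ 4)
      atTop (nhds ((K + ε / 4) * 1 + 0)) := by
    have h1 : Tendsto (fun m : ℕ => ((m : ℝ) + 1) ^ 4 / (m : ℝ) ^ 4) atTop (nhds 1) := by
      have := ((PowAsymp.tendsto_natCast_affine_div 1 1).pow 4)
      simpa [div_pow] using this
    have h2 : Tendsto (fun m : ℕ => (K₁ + K₂) / (m : ℝ) ^ 4) atTop (nhds 0) :=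
      tendsto_const_nhds.div_atTop
        ((tendsto_pow_atTop (by norm_num)).comp tendsto_natCast_atTop_atTop)
    refine ((h1.const_mul (K + ε / 4)).add h2).congr fun m => ?_
    ring
  filter_upwards [hlim.eventually_lt_const (show _ < K + ε by linarith),
    eventually_gt_atTop 0] with m hm hm0 x
  have hm' : (0 : ℝ) < m := by exact_mod_cast hm0
  rw [div_lt_iff₀ (by positivity)] at hm
  refine hardy_schur hb hf0 (fun k hk => ?_) x
  have hfHk : 0 < f k * H k := mul_pos (hf0 k) (hH k)
  have e : ∑ i ∈ Finset.range (k + 1), b i * ∑ l ∈ Finset.Ico i m, f l =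
      (Y k - g m * Z k) * (f k * H k) := by
    have h1 : ∀ i ∈ Finset.range (k + 1), b i * ∑ l ∈ Finset.Ico i m, f l =
        b i * g i - g m * b i := fun i hi => by
      rw [sum_Ico_sub_succ g (by have := Finset.mem_range.1 hi; omega)]
      ring
    rw [Finset.sum_congr rfl h1, Finset.sum_sub_distrib, ← Finset.mul_sum, sub_mul, mul_assoc,
      div_mul_cancel₀ _ hfHk.ne', div_mul_cancel₀ _ hfHk.ne']
  rw [e]
  exact mul_le_mul_of_nonneg_right ((hbound m k hk).trans hm.le) hfHk.le

/-- Testing the Hardy inequality on `x k = (k + 1) ^ 4 - k ^ 4`. -/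
theorem hardy_lower {lam D : ℝ} (hlam : -(1/2 : ℝ) < lam) (hD : 0 < D) {b H : ℕ → ℝ}
    (hH : ∀ i, 0 < H i) (hba : PowAsymp b (2 * lam) (16 * D))
    (hHa : PowAsymp H (2 * lam - 2) D) :
    ∀ᶠ m : ℕ in atTop,
      0 < ∑ k ∈ Finset.range m, H k * (((k : ℝ) + 1) ^ 4 - (k : ℝ) ^ 4) ^ 2 ∧
      16 * (1 / ((2 * lam + 1) * (2 * lam + 5))) * (m : ℝ) ^ 4 *
          ∑ k ∈ Finset.range m, H k * (((k : ℝ) + 1) ^ 4 - (k : ℝ) ^ 4) ^ 2 ≤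
        ∑ i ∈ Finset.range m,
          b i * (∑ k ∈ Finset.Ico i m, (((k : ℝ) + 1) ^ 4 - (k : ℝ) ^ 4)) ^ 2 := by
  have h1 : 0 < 2 * lam + 1 := by linarith
  have h5 : 0 < 2 * lam + 5 := by linarith
  have h9 : 0 < 2 * lam + 9 := by linarith
  have hx : PowAsymp (fun k : ℕ => ((k : ℝ) + 1) ^ 4 - (k : ℝ) ^ 4) 3 4 := by
    have := PowAsymp.rpow_succ_sub 4
    norm_num at this
    exact_mod_cast this
  have hN := (hHa.mul (hx.mul hx)).sum_range (by linarith)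
  have hN0 : ∀ᶠ m : ℕ in atTop,
      0 < ∑ k ∈ Finset.range m, H k * (((k : ℝ) + 1) ^ 4 - (k : ℝ) ^ 4) ^ 2 := by
    filter_upwards [eventually_gt_atTop 0] with m hm
    refine Finset.sum_pos (fun k _ => mul_pos (hH k) (pow_pos (sub_pos.2 ?_) 2))
      ⟨0, Finset.mem_range.2 hm⟩
    exact pow_lt_pow_left₀ (by linarith) (by positivity) (by norm_num)
  have hB0 := (PowAsymp.natPow 8).mul (hba.sum_range (by linarith))
  have hB4 := ((PowAsymp.natPow 4).mul
    ((hba.mul (PowAsymp.natPow 4)).sum_range (by push_cast; linarith))).const_mul (-2)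
  have hB8 := (hba.mul (PowAsymp.natPow 8)).sum_range (by push_cast; linarith)
  have e0 : ((8 : ℕ) : ℝ) + (2 * lam + 1) = 2 * lam + 9 := by push_cast; ring
  have e4 : ((4 : ℕ) : ℝ) + (2 * lam + ((4 : ℕ) : ℝ) + 1) = 2 * lam + 9 := by push_cast; ring
  have e8 : 2 * lam + ((8 : ℕ) : ℝ) + 1 = 2 * lam + 9 := by push_cast; ring
  rw [e0] at hB0
  rw [e4] at hB4
  rw [e8] at hB8
  have hDm : D * (4 * 4) / (2 * lam - 2 + (3 + 3) + 1) ≠ 0 := by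
    rw [show 2 * lam - 2 + (3 + 3) + 1 = 2 * lam + 5 by ring]
    positivity
  have hR := ((hB0.add hB4).add hB8).div hN hDm
  have eexp : 2 * lam + 9 - (2 * lam - 2 + (3 + 3) + 1) = ((4 : ℕ) : ℝ) := by push_cast; ring
  rw [eexp] at hR
  have hlt : 16 * (1 / ((2 * lam + 1) * (2 * lam + 5))) <
      (1 * (16 * D / (2 * lam + 1)) + -2 * (1 * (16 * D * 1 / (2 * lam + ((4 : ℕ) : ℝ) + 1))) +
        16 * D * 1 / (2 * lam + 9)) / (D * (4 * 4) / (2 * lam - 2 + (3 + 3) + 1)) := by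
    have : (1 * (16 * D / (2 * lam + 1)) + -2 * (1 * (16 * D * 1 / (2 * lam + ((4 : ℕ) : ℝ) + 1))) +
        16 * D * 1 / (2 * lam + 9)) / (D * (4 * 4) / (2 * lam - 2 + (3 + 3) + 1)) =
        16 * (2 / ((2 * lam + 1) * (2 * lam + 9))) := by
      rw [show 2 * lam - 2 + (3 + 3) + 1 = 2 * lam + 5 by ring,
        show 2 * lam + ((4 : ℕ) : ℝ) + 1 = 2 * lam + 5 by push_cast; ring]
      field_simp
      ring
    rw [this]
    refine mul_lt_mul_of_pos_left ?_ (by norm_num)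
    rw [div_lt_div_iff₀ (by positivity) (by positivity)]
    nlinarith
  filter_upwards [hN0, Tendsto.eventually_const_lt hlt hR, eventually_gt_atTop 0] with m hm0 hm hmp
  refine ⟨hm0, ?_⟩
  have hm' : (0 : ℝ) < m := by exact_mod_cast hmp
  rw [Real.rpow_natCast, lt_div_iff₀ (by positivity)] at hm
  simp only [← sq] at hm
  rw [lt_div_iff₀ hm0] at hm
  refine hm.le.trans (le_of_eq ?_)
  rw [Finset.mul_sum, Finset.mul_sum, Finset.mul_sum, ← Finset.sum_add_distrib,
    ← Finset.sum_add_distrib]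
  refine Finset.sum_congr rfl fun i hi => ?_
  have hs := sum_Ico_sub_succ (fun k : ℕ => -(k : ℝ) ^ 4) (Finset.mem_range.1 hi).le
  have hs' : ∑ k ∈ Finset.Ico i m, (((k : ℝ) + 1) ^ 4 - (k : ℝ) ^ 4) =
      (m : ℝ) ^ 4 - (i : ℝ) ^ 4 := by
    rw [show (m : ℝ) ^ 4 - (i : ℝ) ^ 4 = -(i : ℝ) ^ 4 - -(m : ℝ) ^ 4 by ring, ← hs]
    refine Finset.sum_congr rfl fun k _ => ?_
    push_cast
    ring
  rw [hs']
  ring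

theorem markov_upper {lam K : ℝ} (hlam : -(1/2 : ℝ) < lam) (hK : 0 ≤ K)
    (h : ∀ r, HardyBound (hardyLeft lam r) (hardyRight lam r) (16 * K)) {ε : ℝ} (hε : 0 < ε) :
    ∀ᶠ n : ℕ in atTop, ∀ p : ℝ[X], p.natDegree ≤ n →
      gegInt lam (derivative p ^ 2) ≤ (K + ε) * (n : ℝ) ^ 4 * gegInt lam (p ^ 2) := by
  have hm : Tendsto (fun n : ℕ => n / 2 + 1) atTop atTop :=
    tendsto_atTop_atTop.2 fun b => ⟨2 * b, fun n hn => by omega⟩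
  have hlim : Tendsto (fun n : ℕ => (K + ε / 2) * (((1 * n + 2 : ℕ) : ℝ) / n) ^ 4) atTop
      (nhds ((K + ε / 2) * ((1 : ℕ) : ℝ) ^ 4)) :=
    ((PowAsymp.tendsto_natCast_affine_div 1 2).pow 4).const_mul _
  have hlt : (K + ε / 2) * ((1 : ℕ) : ℝ) ^ 4 < K + ε := by
    push_cast
    linarith
  filter_upwards [hm.eventually (h 0 (8 * ε) (by linarith)),
    hm.eventually (h 1 (8 * ε) (by linarith)), hlim.eventually_lt_const hlt,
    eventually_gt_atTop 0] with n h0 h1 hn hn0 p hp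
  have hn' : (0 : ℝ) < n := by exact_mod_cast hn0
  rw [div_pow, ← mul_div_assoc, div_lt_iff₀ (by positivity)] at hn
  set m := n / 2 + 1 with hmdef
  obtain ⟨a, rfl⟩ := exists_eq_sum_geg hlam (2 * m + 1) p (by omega)
  have hmn : (2 * (m : ℝ)) ^ 4 ≤ ((1 * n + 2 : ℕ) : ℝ) ^ 4 := by
    refine pow_le_pow_left₀ (by positivity) ?_ 4
    exact_mod_cast (by omega : 2 * m ≤ 1 * n + 2)
  have hconst : (16 * K + 8 * ε) * (m : ℝ) ^ 4 ≤ (K + ε) * (n : ℝ) ^ 4 := by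
    have := mul_le_mul_of_nonneg_left hmn (show 0 ≤ K + ε / 2 by linarith)
    nlinarith
  have hN := gegInt_sum_sq_split hlam a m
  rw [gegInt_derivative_sum_sq_split hlam]
  have hR : ∀ r : ℕ, ∀ x : ℕ → ℝ, 0 ≤ ∑ i ∈ Finset.range m, hardyRight lam r i * x i ^ 2 :=
    fun r x => Finset.sum_nonneg fun i _ => mul_nonneg (hardyRight_pos hlam r i).le (sq_nonneg _)
  have h00 : 0 ≤ a 0 ^ 2 * gegSq lam 0 := mul_nonneg (sq_nonneg _) (gegSq_pos hlam 0).le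
  have hA := hR 0 fun i => a (2 * i + 1)
  have hB := hR 1 fun i => a (2 * i + 2)
  refine (add_le_add (h0 fun i => a (2 * i + 1)) (h1 fun i => a (2 * i + 2))).trans ?_
  rw [hN, ← mul_add]
  exact mul_le_mul hconst (by linarith) (by linarith) (by positivity)

theorem markov_lower {lam : ℝ} (hlam : -(1/2 : ℝ) < lam) :
    ∀ᶠ n : ℕ in atTop, ∃ p : ℝ[X], p.natDegree ≤ n ∧ 0 < gegInt lam (p ^ 2) ∧
      1 / ((2 * lam + 1) * (2 * lam + 5)) * (n : ℝ) ^ 4 * gegInt lam (p ^ 2) ≤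
        gegInt lam (derivative p ^ 2) := by
  obtain ⟨D, hD, hDr⟩ := hardy_weights_powAsymp hlam
  have hm : Tendsto (fun n : ℕ => (n + 1) / 2) atTop atTop :=
    tendsto_atTop_atTop.2 fun b => ⟨2 * b, fun n hn => by omega⟩
  filter_upwards [hm.eventually
    (hardy_lower hlam hD (hardyRight_pos hlam 0) (hDr 0).1 (hDr 0).2)] with n ⟨h0, h1⟩
  set m := (n + 1) / 2 with hmdef
  set x : ℕ → ℝ := fun k => ((k : ℝ) + 1) ^ 4 - (k : ℝ) ^ 4 with hx
  set a : ℕ → ℝ := fun k => if k % 2 = 1 then x (k / 2) else 0 with ha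
  have a1 : ∀ i, a (2 * i + 1) = x i := fun i => by
    simp only [ha, if_pos (show (2 * i + 1) % 2 = 1 by omega),
      show (2 * i + 1) / 2 = i by omega]
  have a2 : ∀ i, a (2 * i + 2) = 0 := fun i => by
    simp only [ha, if_neg (show ¬ (2 * i + 2) % 2 = 1 by omega)]
  have a0 : a 0 = 0 := by simp [ha]
  have hN := gegInt_sum_sq_split hlam a m
  have hQ := gegInt_derivative_sum_sq_split hlam a m
  simp only [a0, a1, a2, Finset.sum_const_zero, mul_zero, zero_mul, add_zero, zero_add, ne_eq,
    OfNat.ofNat_ne_zero, not_false_eq_true, zero_pow] at hN hQ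
  refine ⟨_, ?_, hN ▸ h0, ?_⟩
  · refine natDegree_sum_le_of_forall_le _ _ fun k hk => ?_
    have hk' := Finset.mem_range.1 hk
    by_cases hk2 : k % 2 = 1
    · refine (natDegree_C_mul_le _ _).trans
        ((geg_natDegree_le_and_coeff_ne_zero hlam k).1.trans (by omega))
    · simp [ha, hk2]
  · rw [hN, hQ]
    refine le_trans ?_ h1
    refine mul_le_mul_of_nonneg_right ?_ h0.le
    have h5 : 0 < (2 * lam + 1) * (2 * lam + 5) := mul_pos (by linarith) (by linarith)
    have hnm : (n : ℝ) ^ 4 ≤ (2 * (m : ℝ)) ^ 4 := by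
      refine pow_le_pow_left₀ (by positivity) ?_ 4
      exact_mod_cast (by omega : n ≤ 2 * m)
    have := mul_le_mul_of_nonneg_left hnm (one_div_pos.2 h5).le
    linarith

theorem eventually_markovConst_le {lam K : ℝ} (hlam : -(1/2 : ℝ) < lam) (hK : 0 ≤ K)
    (h : ∀ r, HardyBound (hardyLeft lam r) (hardyRight lam r) (16 * K)) {ε : ℝ} (hε : 0 < ε) :
    ∀ᶠ n : ℕ in atTop, markovConst lam n ^ 2 / (n : ℝ) ^ 4 ≤ K + ε := by
  filter_upwards [markov_upper hlam hK h hε] with n hn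
  refine div_le_of_le_mul₀ (by positivity) (by positivity) ?_
  exact sq_markovConst_le (by positivity) hn

theorem limsup_markovConst_le {lam K : ℝ} (hlam : -(1/2 : ℝ) < lam) (hK : 0 ≤ K)
    (h : ∀ r, HardyBound (hardyLeft lam r) (hardyRight lam r) (16 * K)) :
    limsup (fun n : ℕ => markovConst lam n ^ 2 / (n : ℝ) ^ 4) atTop ≤ K := by
  refine le_of_forall_pos_le_add fun ε hε => ?_
  refine limsup_le_of_le ?_ (eventually_markovConst_le hlam hK h hε)
  exact (isBoundedUnder_of ⟨0, fun n => by positivity⟩ :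
    IsBoundedUnder (· ≥ ·) atTop _).isCoboundedUnder_le

theorem asymptotic_markov_constant_bounds (lam : ℝ) (hlam : -(1/2 : ℝ) < lam) :
    1 / ((2*lam + 1) * (2*lam + 5))
      ≤ Filter.liminf (fun n : ℕ => (markovConst lam n)^2 / (n : ℝ)^4) Filter.atTop ∧
    Filter.limsup (fun n : ℕ => (markovConst lam n)^2 / (n : ℝ)^4) Filter.atTop
      ≤ 1 / (2 * (2*lam + 1) * Real.sqrt (2*lam + 5)) ∧
    (2 ≤ lam →
      Filter.limsup (fun n : ℕ => (markovConst lam n)^2 / (n : ℝ)^4) Filter.atTop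
        ≤ 1 / ((lam + 2) * (lam + 3))) := by
  obtain ⟨D, hD, hDr⟩ := hardy_weights_powAsymp hlam
  have h1 : 0 < 2 * lam + 1 := by linarith
  have hfrob : ∀ r, HardyBound (hardyLeft lam r) (hardyRight lam r)
      (16 * (1 / (2 * (2 * lam + 1) * Real.sqrt (2 * lam + 5)))) := fun r =>
    hardyBound_frobenius hlam hD (hardyRight_pos hlam r) (hDr r).1 (hDr r).2
  have hK : 0 ≤ 1 / (2 * (2 * lam + 1) * Real.sqrt (2 * lam + 5)) := by positivity
  refine ⟨?_, limsup_markovConst_le hlam hK hfrob, fun h2 => ?_⟩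
  · refine le_liminf_of_le ?_ ?_
    · exact (isBoundedUnder_of_eventually_le
        (eventually_markovConst_le hlam hK hfrob one_pos)).isCoboundedUnder_ge
    · filter_upwards [markov_lower hlam, markov_upper hlam hK hfrob one_pos,
        eventually_gt_atTop 0] with n ⟨p, hp, hpos, hle⟩ hn hn0
      have hn' : (0 : ℝ) < n := by exact_mod_cast hn0
      rw [le_div_iff₀ (by positivity)]
      exact le_of_mul_le_mul_right (hle.trans (gegInt_derivative_sq_le hn hp hpos)) hpos
  · have h3 : 0 < lam + 2 := by linarith
    have h4 : 0 < lam + 3 := by linarith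
    exact limsup_markovConst_le hlam (by positivity) fun r =>
      hardyBound_schur h2 hD (hardyLeft_nonneg hlam r) (hardyRight_pos hlam r) (hDr r).1 (hDr r).2
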